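/- Let V be a finite-dimensional real inner product space, Υ a lattice in V such that √2·Υ is even and unimodular, M, N a polarization of Υ, and k ≥ 2 an integer. Then μ(L(M,N,k)) ≥ min( k·μ(Υ), 2·min(μ(M), 2μ(Υ)) ). -/

import Mathlib

noncomputable section

open scoped RealInnerProductSpace Pointwise
open Module

variable {V : Type*} [NormedAddCommGroup V] [InnerProductSpace ℝ V]

/-- `L` is a (full) lattice in `V`: a finitely generated `ℤ`-submodule spanning `V` over `ℝ`. -/
def IsLat (L : Submodule ℤ V) : Prop :=
  L.FG ∧ Submodule.span ℝ (L : Set V) = ⊤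

/-- The lattice `L` is integral: all inner products of lattice vectors are integers. -/
def IsIntegralLat (L : Submodule ℤ V) : Prop :=
  ∀ x ∈ L, ∀ y ∈ L, ∃ n : ℤ, ⟪x, y⟫ = (n : ℝ)

/-- The lattice `L` is even: it is integral and all norms are even integers. -/
def IsEvenLat (L : Submodule ℤ V) : Prop :=
  IsIntegralLat L ∧ ∀ x ∈ L, ∃ n : ℤ, ⟪x, x⟫ = 2 * (n : ℝ)

/-- The lattice `L` is unimodular: the Gram matrix of some `ℤ`-basis has determinant 1. -/
def IsUnimodularLat (L : Submodule ℤ V) : Prop :=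
  ∃ (n : ℕ) (b : Basis (Fin n) ℤ L),
    (Matrix.of fun i j : Fin n => ⟪(b i : V), (b j : V)⟫).det = 1

/-- The minimum norm `μ(L)` of a lattice. -/
def minNorm (L : Submodule ℤ V) : ℝ :=
  sInf {r : ℝ | ∃ x ∈ L, x ≠ 0 ∧ ⟪x, x⟫ = r}

/-- `√2·Υ` is an even unimodular lattice: all norms of `Υ` are integers, all doubled inner
products are integers, and the Gram matrix of the form `2⟪·,·⟫` on a `ℤ`-basis of `Υ` has
determinant 1. -/
def SqrtTwoEvenUnimod (Υ : Submodule ℤ V) : Prop :=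
  (∀ x ∈ Υ, ∃ n : ℤ, ⟪x, x⟫ = (n : ℝ)) ∧
  (∀ x ∈ Υ, ∀ y ∈ Υ, ∃ n : ℤ, 2 * ⟪x, y⟫ = (n : ℝ)) ∧
  ∃ (n : ℕ) (b : Basis (Fin n) ℤ Υ),
    (Matrix.of fun i j : Fin n => 2 * ⟪(b i : V), (b j : V)⟫).det = 1

/-- `M, N` is a polarization of `Υ`: a pair of integral sublattices with
`M + N = Υ` and `M ∩ N = 2Υ`. -/
def IsPolarization (Υ M N : Submodule ℤ V) : Prop :=
  M ≤ Υ ∧ N ≤ Υ ∧ IsIntegralLat M ∧ IsIntegralLat N ∧ M ⊔ N = Υ ∧ M ⊓ N = (2 : ℤ) • Υ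

/-- The sublattice `L_M = {(x_1,…,x_k) ∈ M^k : x_1+⋯+x_k ∈ M ∩ N}` of `V^k`. -/
def LsubM (M N : Submodule ℤ V) (k : ℕ) : Submodule ℤ (PiLp 2 fun _ : Fin k => V) where
  carrier := {v | (∀ i, v i ∈ M) ∧ (∑ i, v i) ∈ M ⊓ N}
  add_mem' := fun {a b} ha hb =>
    ⟨fun i => M.add_mem (ha.1 i) (hb.1 i), by
      have h : (∑ i, (a + b) i) = (∑ i, a i) + ∑ i, b i :=
        (Finset.sum_congr rfl fun i _ => rfl).trans Finset.sum_add_distrib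
      rw [h]; exact (M ⊓ N).add_mem ha.2 hb.2⟩
  zero_mem' := ⟨fun _ => M.zero_mem, by
      have h : (∑ i : Fin k, (0 : PiLp 2 fun _ : Fin k => V) i) = 0 :=
        Finset.sum_eq_zero fun _ _ => rfl
      rw [h]; exact (M ⊓ N).zero_mem⟩
  smul_mem' := fun c a ha =>
    ⟨fun i => M.smul_mem c (ha.1 i), by
      have h : (∑ i, (c • a) i) = c • ∑ i, a i := by
        show (∑ i, c • a i) = c • ∑ i, a i
        exact Finset.smul_sum.symm
      rw [h]; exact (M ⊓ N).smul_mem c ha.2⟩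

/-- The diagonal sublattice `L^N = {(y,…,y) : y ∈ N}` of `V^k`. -/
def LsupN (N : Submodule ℤ V) (k : ℕ) : Submodule ℤ (PiLp 2 fun _ : Fin k => V) where
  carrier := {v | ∃ y ∈ N, ∀ i, v i = y}
  add_mem' := fun {a b} ha hb => by
    obtain ⟨ya, hya, ha⟩ := ha
    obtain ⟨yb, hyb, hb⟩ := hb
    exact ⟨ya + yb, N.add_mem hya hyb, fun i => by
      show a i + b i = ya + yb
      rw [ha i, hb i]⟩
  zero_mem' := ⟨0, N.zero_mem, fun _ => rfl⟩
  smul_mem' := fun c a ha => by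
    obtain ⟨y, hy, h⟩ := ha
    exact ⟨c • y, N.smul_mem c hy, fun i => by
      show c • a i = c • y
      rw [h i]⟩

/-- The lattice `L(M,N,k) = L_M + L^N ⊆ V^k`. -/
def LMN (M N : Submodule ℤ V) (k : ℕ) : Submodule ℤ (PiLp 2 fun _ : Fin k => V) :=
  LsubM M N k ⊔ LsupN N k

/-- The Leech polarization setup: `V` is 24-dimensional, `√2·Υ` is even unimodular with
minimum norm 4, and `M, N` is a polarization of `Υ` by two copies of the Leech lattice. -/
def LeechSetup (Υ M N : Submodule ℤ V) : Prop :=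
  Module.finrank ℝ V = 24 ∧ IsLat Υ ∧ SqrtTwoEvenUnimod Υ ∧
  (∀ v ∈ Υ, v ≠ 0 → 4 ≤ 2 * ⟪v, v⟫) ∧
  IsPolarization Υ M N ∧
  IsLat M ∧ IsEvenLat M ∧ IsUnimodularLat M ∧ minNorm M = 4 ∧
  IsLat N ∧ IsEvenLat N ∧ IsUnimodularLat N ∧ minNorm N = 4

/-- `(w,x,y,z) ∈ N × M × M × M` is admissible if `x + y + z ∈ M ∩ N`. -/
def Admissible (M N : Submodule ℤ V) (w x y z : V) : Prop :=
  w ∈ N ∧ x ∈ M ∧ y ∈ M ∧ z ∈ M ∧ x + y + z ∈ M ⊓ N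

/-- An offender is an admissible quadruple all three of whose associated vectors
`w+x, w+y, w+z` have norm 2. -/
def Offender (M N : Submodule ℤ V) (w x y z : V) : Prop :=
  Admissible M N w x y z ∧
  ⟪w + x, w + x⟫ = 2 ∧ ⟪w + y, w + y⟫ = 2 ∧ ⟪w + z, w + z⟫ = 2

/-- A super offender is an offender with `⟪w,w⟫ = 4` whose multiset of norms
`{⟪x,x⟫, ⟪y,y⟫, ⟪z,z⟫}` equals `{6,6,4}`. -/
def SuperOffender (M N : Submodule ℤ V) (w x y z : V) : Prop :=
  Offender M N w x y z ∧ ⟪w, w⟫ = 4 ∧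
  ({⟪x, x⟫, ⟪y, y⟫, ⟪z, z⟫} : Multiset ℝ) = ({6, 6, 4} : Multiset ℝ)

/-!
Let `v = a + (y, …, y)` be a nonzero vector of `L(M,N,k)`, where `a ∈ L_M` and `y ∈ N`. If no
coordinate of `v` vanishes, each of them contributes at least `μ(Υ)` to the norm. If the `j`-th
coordinate vanishes, then `y = -a_j` lies in `M ∩ N`, so `v` itself lies in `L_M`. Then either two
coordinates of `v` are nonzero vectors of `M`, or `v` has a single nonzero coordinate, which equals
the coordinate sum and hence lies in `M ∩ N = 2Υ`, where norms are at least `4μ(Υ)`.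
-/

theorem pointwise_smul_ne_bot {R E : Type*} [CommRing R] [IsDomain R] [AddCommGroup E] [Module R E]
    [IsTorsionFree R E] {c : R} (hc : c ≠ 0) {L : Submodule R E} (hL : L ≠ ⊥) : c • L ≠ ⊥ := by
  obtain ⟨x, hx, hx0⟩ := L.ne_bot_iff.mp hL
  exact (Submodule.ne_bot_iff _).mpr
    ⟨c • x, Submodule.smul_mem_pointwise_smul x c L hx, smul_ne_zero hc hx0⟩

section MinNorm

variable {L : Submodule ℤ V}

theorem minNorm_nonneg (L : Submodule ℤ V) : 0 ≤ minNorm L := by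
  refine Real.sInf_nonneg ?_
  rintro _ ⟨x, -, -, rfl⟩
  exact real_inner_self_nonneg

theorem minNorm_bot : minNorm (⊥ : Submodule ℤ V) = 0 := by
  simp +contextual [minNorm]

theorem minNorm_le_inner_self {x : V} (hx : x ∈ L) (hx0 : x ≠ 0) : minNorm L ≤ ⟪x, x⟫ := by
  refine csInf_le ⟨0, ?_⟩ ⟨x, hx, hx0, rfl⟩
  rintro _ ⟨y, -, -, rfl⟩
  exact real_inner_self_nonneg

theorem le_minNorm {c : ℝ} (hL : L ≠ ⊥) (h : ∀ x ∈ L, x ≠ 0 → c ≤ ⟪x, x⟫) : c ≤ minNorm L := by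
  obtain ⟨x, hx, hx0⟩ := L.ne_bot_iff.mp hL
  refine le_csInf ⟨_, x, hx, hx0, rfl⟩ ?_
  rintro _ ⟨y, hy, hy0, rfl⟩
  exact h y hy hy0

theorem minNorm_zsmul {c : ℤ} (hc : c ≠ 0) (L : Submodule ℤ V) :
    minNorm (c • L) = (c : ℝ) ^ 2 * minNorm L := by
  have : IsAddTorsionFree V := .of_isTorsionFree ℝ V
  have norm_zsmul_sq (x : V) : ‖c • x‖ ^ 2 = (c : ℝ) ^ 2 * ‖x‖ ^ 2 := by
    rw [← Int.cast_smul_eq_zsmul ℝ, norm_smul, mul_pow, Real.norm_eq_abs, sq_abs]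
  rw [minNorm, minNorm, ← smul_eq_mul, ← Real.sInf_smul_of_nonneg (sq_nonneg _)]
  congr 1
  ext r
  simp [Set.mem_smul_set, Submodule.mem_smul_pointwise_iff_exists, hc, norm_zsmul_sq, and_assoc]

theorem card_mul_minNorm_le_inner_self {ι : Type*} [Fintype ι] {v : PiLp 2 fun _ : ι => V}
    (s : Finset ι) (hvL : ∀ i ∈ s, v i ∈ L) (hv0 : ∀ i ∈ s, v i ≠ 0) :
    s.card * minNorm L ≤ ⟪v, v⟫ :=
  calc s.card * minNorm L = ∑ _i ∈ s, minNorm L := by rw [Finset.sum_const, nsmul_eq_mul]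
    _ ≤ ∑ i ∈ s, ⟪v i, v i⟫ :=
        Finset.sum_le_sum fun i hi => minNorm_le_inner_self (hvL i hi) (hv0 i hi)
    _ ≤ ∑ i, ⟪v i, v i⟫ :=
        Finset.sum_le_univ_sum_of_nonneg fun _ => real_inner_self_nonneg
    _ = ⟪v, v⟫ := (PiLp.inner_apply v v).symm

end MinNorm

section Membership

variable {E : Type*} [NormedAddCommGroup E] {M N : Submodule ℤ E} {k : ℕ}
  {v : PiLp 2 fun _ : Fin k => E}

theorem LsupN_inf_le_LsubM (M N : Submodule ℤ E) (k : ℕ) : LsupN (M ⊓ N) k ≤ LsubM M N k := by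
  rintro v ⟨y, hy, hvy⟩
  refine ⟨fun i => hvy i ▸ hy.1, ?_⟩
  simpa only [hvy, Finset.sum_const] using nsmul_mem hy _

theorem LMN_ne_bot (M : Submodule ℤ E) (hN : N ≠ ⊥) (hk : 0 < k) : LMN M N k ≠ ⊥ := by
  obtain ⟨y, hy, hy0⟩ := N.ne_bot_iff.mp hN
  refine (Submodule.ne_bot_iff _).mpr
    ⟨WithLp.toLp 2 fun _ => y, Submodule.mem_sup_right ⟨y, hy, fun _ => rfl⟩, fun h => hy0 ?_⟩
  exact congrArg (fun v : PiLp 2 fun _ : Fin k => E => v ⟨0, hk⟩) h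

theorem exists_apply_eq_add_of_mem_LMN (hv : v ∈ LMN M N k) :
    ∃ a ∈ LsubM M N k, ∃ y ∈ N, ∀ i, v i = a i + y := by
  obtain ⟨a, ha, b, ⟨y, hy, hby⟩, rfl⟩ := Submodule.mem_sup.mp hv
  exact ⟨a, ha, y, hy, fun i => by rw [PiLp.add_apply, hby]⟩

theorem apply_mem_sup_of_mem_LMN (hv : v ∈ LMN M N k) (i : Fin k) : v i ∈ M ⊔ N := by
  obtain ⟨a, ha, y, hy, hvay⟩ := exists_apply_eq_add_of_mem_LMN hv
  exact hvay i ▸ Submodule.add_mem_sup (ha.1 i) hy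

theorem mem_LsubM_of_mem_LMN_of_apply_eq_zero (hv : v ∈ LMN M N k) {j : Fin k} (hj : v j = 0) :
    v ∈ LsubM M N k := by
  obtain ⟨a, ha, y, hy, hvay⟩ := exists_apply_eq_add_of_mem_LMN hv
  have hyM : y ∈ M := by
    have : y = -a j := eq_neg_of_add_eq_zero_right (hvay j ▸ hj)
    exact this ▸ M.neg_mem (ha.1 j)
  have hdiag : v - a ∈ LsupN (M ⊓ N) k := ⟨y, ⟨hyM, hy⟩, fun i => by simp [hvay]⟩
  exact (Submodule.sub_mem_iff_left _ ha).mp (LsupN_inf_le_LsubM M N k hdiag)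

end Membership

section NormBound

variable {Υ M N : Submodule ℤ V} {k : ℕ} {v : PiLp 2 fun _ : Fin k => V}

theorem min_minNorm_le_inner_self_of_mem_LsubM (hv : v ∈ LsubM M N k) (hv0 : v ≠ 0) :
    min (2 * minNorm M) (minNorm (M ⊓ N)) ≤ ⟪v, v⟫ := by
  obtain ⟨hvM, hsum⟩ := hv
  obtain ⟨p, hp⟩ : ∃ p, v p ≠ 0 := by
    contrapose! hv0
    exact PiLp.ext hv0
  by_cases hother : ∃ q, q ≠ p ∧ v q ≠ 0
  · obtain ⟨q, hqp, hq⟩ := hother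
    have htwo := card_mul_minNorm_le_inner_self {q, p} (fun i _ => hvM i) (by simp [hp, hq])
    rw [Finset.card_pair hqp, Nat.cast_two] at htwo
    exact (min_le_left _ _).trans htwo
  · push Not at hother
    have hpMN : v p ∈ M ⊓ N := Fintype.sum_eq_single p hother ▸ hsum
    have hone := card_mul_minNorm_le_inner_self (L := M ⊓ N) (v := v) {p}
      (by simpa using hpMN) (by simpa using hp)
    rw [Finset.card_singleton, Nat.cast_one, one_mul] at hone
    exact (min_le_right _ _).trans hone

theorem min_minNorm_le_inner_self_of_mem_LMN (hM : M ≤ Υ) (hN : N ≤ Υ) (hv : v ∈ LMN M N k)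
    (hv0 : v ≠ 0) :
    min (k * minNorm Υ) (min (2 * minNorm M) (minNorm (M ⊓ N))) ≤ ⟪v, v⟫ := by
  by_cases hzero : ∃ j, v j = 0
  · obtain ⟨j, hj⟩ := hzero
    exact (min_le_right _ _).trans <|
      min_minNorm_le_inner_self_of_mem_LsubM (mem_LsubM_of_mem_LMN_of_apply_eq_zero hv hj) hv0
  · push Not at hzero
    have hall := card_mul_minNorm_le_inner_self Finset.univ
      (fun i _ => sup_le hM hN (apply_mem_sup_of_mem_LMN hv i)) (fun i _ => hzero i)
    rw [Finset.card_fin] at hall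
    exact (min_le_left _ _).trans hall

end NormBound

theorem statement5_general {Υ M N : Submodule ℤ V} (hM : M ≤ Υ) (hN : N ≤ Υ)
    (hMN : M ⊓ N = (2 : ℤ) • Υ) {k : ℕ} (hk : 0 < k) :
    min ((k : ℝ) * minNorm Υ) (2 * min (minNorm M) (2 * minNorm Υ)) ≤
      minNorm (LMN M N k) := by
  rcases eq_or_ne Υ ⊥ with rfl | hΥ
  · -- `minNorm ⊥ = 0` is the junk value `sInf ∅`.
    refine (min_le_left _ _).trans ?_
    rw [minNorm_bot, mul_zero]
    exact minNorm_nonneg _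
  · have : IsAddTorsionFree V := .of_isTorsionFree ℝ V
    have hN0 : N ≠ ⊥ :=
      ne_bot_of_le_ne_bot (hMN ▸ pointwise_smul_ne_bot two_ne_zero hΥ) (inf_le_right (a := M))
    have hμ : 2 * min (minNorm M) (2 * minNorm Υ) = min (2 * minNorm M) (minNorm (M ⊓ N)) := by
      rw [hMN, minNorm_zsmul two_ne_zero, mul_min_of_nonneg _ _ zero_le_two]
      norm_num [← mul_assoc]
    rw [hμ]
    exact le_minNorm (LMN_ne_bot M hN0 hk) fun v hv hv0 =>
      min_minNorm_le_inner_self_of_mem_LMN hM hN hv hv0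

/-- `μ(L(M,N,k)) ≥ min(k·μ(Υ), 2·min(μ(M), 2μ(Υ)))`. -/
theorem statement5 (Υ M N : Submodule ℤ V) (hΥlat : IsLat Υ)
    (hΥ : SqrtTwoEvenUnimod Υ) (hpol : IsPolarization Υ M N) (k : ℕ) (hk : 2 ≤ k) :
    min ((k : ℝ) * minNorm Υ) (2 * min (minNorm M) (2 * minNorm Υ)) ≤
      minNorm (LMN M N k) := by
  obtain ⟨hM, hN, -, -, -, hMN⟩ := hpol
  exact statement5_general hM hN hMN (zero_lt_two.trans_le hk)
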